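/- arXiv:1309.4542 — 2 statements merged into one kernel-verified Lean document; each statement's English description precedes it below -/
import Mathlib

section
/- Let d ≥ 2 and let A be a d×n totally positive real matrix with columns p_1, ..., p_n ∈ ℝ^d. For a strictly increasing (d-1)-tuple I of indices in {1,...,n}, let π_I = {x ∈ ℝ^d : det[p_{i_1}, ..., p_{i_{d-1}}, x] = 1}. Then for any two strictly increasing (d-1)-tuples I ≠ J, the number of indices k ∈ {1,...,n} such that the column p_k lies in π_I ∩ π_J is at most d − 1. -/
/-- A real `m × n` matrix is totally positive if every minor (determinant of a square
submatrix taken on strictly increasing row and column indices) is positive. -/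
def IsTotallyPositive {m n : ℕ} (A : Matrix (Fin m) (Fin n) ℝ) : Prop :=
  ∀ (k : ℕ) (r : Fin k → Fin m) (c : Fin k → Fin n),
    StrictMono r → StrictMono c → 0 < (A.submatrix r c).det

/-- The `(d+1) × (d+1)` matrix whose first `d` columns are the columns of `A` indexed by
`I` and whose last column is `x`. -/
def colMat {d n : ℕ} (A : Matrix (Fin (d + 1)) (Fin n) ℝ) (I : Fin d → Fin n)
    (x : Fin (d + 1) → ℝ) : Matrix (Fin (d + 1)) (Fin (d + 1)) ℝ :=
  Matrix.of fun r c => Fin.snoc (α := fun _ => ℝ) (fun i : Fin d => A r (I i)) (x r) c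

lemma det_ne_of_inj {d n : ℕ} (A : Matrix (Fin (d + 1)) (Fin n) ℝ) (hA : IsTotallyPositive A)
    (e : Fin (d + 1) → Fin n) (he : Function.Injective e) : (A.submatrix id e).det ≠ 0 := by
  have hs : StrictMono (e ∘ Tuple.sort e) :=
    (Tuple.monotone_sort e).strictMono_of_injective (he.comp (Tuple.sort e).injective)
  have h := hA (d + 1) id (e ∘ Tuple.sort e) strictMono_id hs
  have h2 := Matrix.det_permute' (Tuple.sort e) (A.submatrix id e)
  rw [Matrix.submatrix_submatrix] at h2
  intro h0
  rw [h0, mul_zero] at h2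
  exact h.ne' h2

lemma colMat_eq_update {d n : ℕ} (A : Matrix (Fin (d + 1)) (Fin n) ℝ) (I : Fin d → Fin n)
    (x : Fin (d + 1) → ℝ) :
    colMat A I x = (colMat A I 0).updateCol (Fin.last d) x := by
  ext r c
  refine Fin.lastCases ?_ (fun i => ?_) c
  · simp [colMat]
  · simp [colMat, Matrix.updateCol_apply, Fin.ext_iff, i.2.ne]

lemma colMat_eq_submatrix {d n : ℕ} (A : Matrix (Fin (d + 1)) (Fin n) ℝ) (I : Fin d → Fin n)
    (k : Fin n) :
    colMat A I (fun r => A r k) = A.submatrix id (Fin.snoc (α := fun _ => Fin n) I k) := by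
  ext r c
  refine Fin.lastCases ?_ (fun i => ?_) c
  · simp [colMat]
  · simp [colMat]

lemma colMat_det_linear {d n : ℕ} (A : Matrix (Fin (d + 1)) (Fin n) ℝ) (I : Fin d → Fin n) :
    ∃ v : Fin (d + 1) → ℝ, ∀ x, (colMat A I x).det = v ⬝ᵥ x := by
  refine ⟨(colMat A I 0).adjugate (Fin.last d), fun x => ?_⟩
  rw [colMat_eq_update, ← Matrix.cramer_apply, Matrix.cramer_eq_adjugate_mulVec]
  rfl

theorem columns_on_two_hyperplanes (d n : ℕ) (hd : 1 ≤ d)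
    (A : Matrix (Fin (d + 1)) (Fin n) ℝ) (hA : IsTotallyPositive A)
    (I J : Fin d → Fin n) (hI : StrictMono I) (hJ : StrictMono J) (hIJ : I ≠ J) :
    ({k : Fin n | (colMat A I (fun r => A r k)).det = 1 ∧
        (colMat A J (fun r => A r k)).det = 1} : Set (Fin n)).ncard ≤ d := by
  classical
  by_contra hcon
  apply hIJ
  obtain ⟨v, hv⟩ := colMat_det_linear A I
  obtain ⟨w, hw⟩ := colMat_det_linear A J
  rw [Set.ncard_eq_toFinset_card'] at hcon
  obtain ⟨t, htS, htc⟩ := Finset.exists_subset_card_eq (Nat.succ_le_of_lt (not_le.mp hcon))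
  have hvw : v - w = 0 := by
    apply Matrix.eq_zero_of_vecMul_eq_zero
      (det_ne_of_inj A hA (t.orderEmbOfFin htc) (t.orderEmbOfFin htc).injective)
    ext i
    have hm := htS (t.orderEmbOfFin_mem htc i)
    rw [Set.mem_toFinset, Set.mem_setOf_eq, hv, hw] at hm
    change (v - w) ⬝ᵥ (fun r => A r (t.orderEmbOfFin htc i)) = 0
    rw [sub_dotProduct, hm.1, hm.2, sub_self]
  have hsub : Set.range J ⊆ Set.range I := by
    rintro _ ⟨j, rfl⟩
    by_contra hj
    have h0 : (colMat A J (fun r => A r (J j))).det = 0 := by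
      apply Matrix.det_zero_of_column_eq (i := j.castSucc) (j := Fin.last d)
      · exact (Fin.castSucc_lt_last j).ne
      · intro r
        simp [colMat]
    rw [hw, ← sub_eq_zero.mp hvw, ← hv, colMat_eq_submatrix] at h0
    exact det_ne_of_inj A hA _ (Fin.snoc_injective_iff.mpr ⟨hI.injective, hj⟩) h0
  have heq : Set.range J = Set.range I := by
    apply Set.eq_of_subset_of_ncard_le hsub
    rw [← Set.image_univ, ← Set.image_univ, Set.ncard_image_of_injective _ hI.injective,
      Set.ncard_image_of_injective _ hJ.injective]
  exact (StrictMono.range_inj hI hJ).mp heq.symm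
end

section
/- Let d ≥ 2 and let A be a d×n totally positive real matrix with columns p_1, ..., p_n ∈ ℝ^d. For a strictly increasing (d-1)-tuple I of indices in {1,...,n} and a real t > 0, let π_{t,I} = {x ∈ ℝ^d : det[p_{i_1}, ..., p_{i_{d-1}}, x] = t}. Then for any positive reals t₁, t₂ and any strictly increasing (d-1)-tuples I, J with (t₁, I) ≠ (t₂, J), the sets π_{t₁,I} and π_{t₂,J} are distinct. -/
lemma colMat_smul_det {d n : ℕ} (A : Matrix (Fin (d + 1)) (Fin n) ℝ) (I : Fin d → Fin n)
    (a : ℝ) (x : Fin (d + 1) → ℝ) :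
    (colMat A I (a • x)).det = a * (colMat A I x).det := by
  have key : ∀ y, colMat A I y = (colMat A I x).updateCol (Fin.last d) y := by
    intro y
    ext r c
    refine Fin.lastCases ?_ (fun i => ?_) c
    · simp [colMat]
    · simp [colMat, Matrix.updateCol_apply, Fin.castSucc_ne_last]
  rw [key (a • x), Matrix.det_updateCol_smul, ← key x]

lemma colMat_col_eq {d n : ℕ} (A : Matrix (Fin (d + 1)) (Fin n) ℝ) (I : Fin d → Fin n)
    (j : Fin n) :
    colMat A I (fun r => A r j) =
      A.submatrix id (Fin.snoc (α := fun _ => Fin n) I j) := by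
  ext r c
  refine Fin.lastCases ?_ (fun i => ?_) c <;> simp [colMat]

lemma det_submatrix_ne_zero {d n : ℕ} (A : Matrix (Fin d) (Fin n) ℝ)
    (hA : IsTotallyPositive A) (c : Fin d → Fin n) (hc : Function.Injective c) :
    (A.submatrix id c).det ≠ 0 := by
  have hm : StrictMono (c ∘ Tuple.sort c) :=
    (Tuple.monotone_sort c).strictMono_of_injective (hc.comp (Equiv.injective _))
  have h := hA d id _ strictMono_id hm
  have e : A.submatrix id (c ∘ Tuple.sort c) =
      (A.submatrix id c).submatrix id (Tuple.sort c) := by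
    ext; rfl
  rw [e, Matrix.det_permute'] at h
  intro h0
  rw [h0] at h
  simp at h

lemma colMat_single_det {d n : ℕ} (A : Matrix (Fin (d + 1)) (Fin n) ℝ)
    (hA : IsTotallyPositive A) (I : Fin d → Fin n) (hI : StrictMono I) :
    (colMat A I (Pi.single (Fin.last d) 1)).det ≠ 0 := by
  have h := hA d Fin.castSucc I Fin.strictMono_castSucc hI
  have e : (colMat A I (Pi.single (Fin.last d) 1)).det
      = (A.submatrix Fin.castSucc I).det := by
    rw [Matrix.det_succ_column _ (Fin.last d), Finset.sum_eq_single (Fin.last d)]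
    · have : (colMat A I (Pi.single (Fin.last d) 1)).submatrix (Fin.last d).succAbove
          (Fin.last d).succAbove = A.submatrix Fin.castSucc I := by
        ext r c
        simp [colMat]
      rw [this]
      simp [colMat, ← two_mul]
    · intro b _ hb
      simp [colMat, hb]
    · simp
  rw [e]
  exact h.ne'

theorem scaled_hyperplanes_distinct (d n : ℕ) (hd : 1 ≤ d)
    (A : Matrix (Fin (d + 1)) (Fin n) ℝ) (hA : IsTotallyPositive A)
    (t₁ t₂ : ℝ) (ht₁ : 0 < t₁) (ht₂ : 0 < t₂)
    (I J : Fin d → Fin n) (hI : StrictMono I) (hJ : StrictMono J)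
    (h : (t₁, I) ≠ (t₂, J)) :
    ({x : Fin (d + 1) → ℝ | (colMat A I x).det = t₁} : Set (Fin (d + 1) → ℝ)) ≠
      {x : Fin (d + 1) → ℝ | (colMat A J x).det = t₂} := by
  intro hS
  have smul_mem : ∀ x, (colMat A I x).det ≠ 0 → 
      t₁ / (colMat A I x).det * (colMat A J x).det = t₂ := by
    intro x hx
    have hm : (t₁ / (colMat A I x).det) • x ∈ {x | (colMat A I x).det = t₁} := by
      rw [Set.mem_setOf_eq, colMat_smul_det]
      field_simp
    rw [hS, Set.mem_setOf_eq, colMat_smul_det] at hm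
    exact hm
  by_cases hIJ : I = J
  · subst hIJ
    have h0 := colMat_single_det A hA I hI
    have h1 := smul_mem _ h0
    rw [div_mul_cancel₀ _ h0] at h1
    exact h (by rw [h1])
  · have hex : ∃ k, J k ∉ Set.range I := by
      by_contra! hc
      have hsub : Finset.univ.image J ⊆ Finset.univ.image I := by
        intro y hy
        obtain ⟨k, -, rfl⟩ := Finset.mem_image.1 hy
        obtain ⟨i, hi⟩ := hc k
        exact Finset.mem_image.2 ⟨i, Finset.mem_univ _, hi⟩
      have heq := Finset.eq_of_subset_of_card_le hsub (by
        rw [Finset.card_image_of_injective _ hI.injective,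
          Finset.card_image_of_injective _ hJ.injective])
      have hr : Set.range J = Set.range I := by
        simpa using congrArg (fun s : Finset (Fin n) => (s : Set (Fin n))) heq
      exact hIJ ((StrictMono.range_inj hI hJ).1 hr.symm)
    obtain ⟨k, hk⟩ := hex
    have hne : (colMat A I (fun r => A r (J k))).det ≠ 0 := by
      rw [colMat_col_eq]
      exact det_submatrix_ne_zero A hA _ (Fin.snoc_injective_iff.2 ⟨hI.injective, hk⟩)
    have hz : (colMat A J (fun r => A r (J k))).det = 0 := by
      apply Matrix.det_zero_of_column_eq (Fin.castSucc_ne_last k)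
      intro r
      simp [colMat]
    have h1 := smul_mem _ hne
    rw [hz, mul_zero] at h1
    exact ht₂.ne h1
end
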